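/- For every N ≥ 1, the Kac matrix and the Krawtchouk matrix satisfy A^(N) · K^(N) = K^(N) · Λ^(N) and K^(N) · A^(N) = Λ^(N) · K^(N); in particular, for each 0 ≤ k ≤ N, the k-th column of K^(N) is an eigenvector of the Kac matrix A^(N) with eigenvalue N − 2k. -/

import Mathlib

/-!
The `j`-th column of the Krawtchouk matrix is the coefficient sequence of
`f_j = (1 - X)^j (1 + X)^(N - j)`. Logarithmic differentiation gives
`(1 - X²) f_j' + N X f_j = (N - 2j) f_j`, and comparing coefficients of `X^i` gives the three-term
recurrence `(i+1) K_{i+1,j} + (N-i+1) K_{i-1,j} = (N - 2j) K_{ij}`, which is `A K = K Λ`.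
Likewise `j f_{j-1} + (N-j) f_{j+1} = N f_j - 2 X f_j'`, whose coefficients give `K A = Λ K`.
At the boundary, `K_{N+1,j} = 0` because `deg f_j ≤ N`, while in the second recurrence the
out-of-range terms carry the factors `j = 0` and `N - j = 0`.
-/

/-- The `(i,j)` entry of the `N`-th Krawtchouk matrix:
`K^(N)_{ij} = ∑_k (−1)^k C(j,k) C(N−j, i−k)`. -/
def kraw (N i j : ℕ) : ℤ :=
  ∑ k ∈ Finset.range (i + 1), (-1 : ℤ) ^ k * (j.choose k) * ((N - j).choose (i - k))

/-- The `N`-th Krawtchouk matrix. -/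
def Kmat (N : ℕ) : Matrix (Fin (N + 1)) (Fin (N + 1)) ℤ :=
  Matrix.of fun i j => kraw N i j

/-- The Kac matrix: `A^(N)_{i,i+1} = i+1`, `A^(N)_{i+1,i} = N−i`, all other entries zero. -/
def Kac (N : ℕ) : Matrix (Fin (N + 1)) (Fin (N + 1)) ℤ :=
  Matrix.of fun i j =>
    if (i : ℕ) + 1 = (j : ℕ) then ((i : ℕ) + 1 : ℤ)
    else if (j : ℕ) + 1 = (i : ℕ) then (N : ℤ) - (j : ℕ)
    else 0

/-- The diagonal matrix `Λ^(N)` with `Λ^(N)_{ii} = N − 2i`. -/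
def Lam (N : ℕ) : Matrix (Fin (N + 1)) (Fin (N + 1)) ℤ :=
  Matrix.diagonal fun i => (N : ℤ) - 2 * (i : ℕ)

open Polynomial in
/-- The generating polynomial `(1 - X)^j (1 + X)^a`; column `j` of `K^(N)` is the case
`a = N - j`. -/
noncomputable def krawPoly (j a : ℕ) : ℤ[X] := (1 - X) ^ j * (1 + X) ^ a

open Polynomial in
theorem coeff_one_sub_X_pow (j k : ℕ) :
    ((1 - X : ℤ[X]) ^ j).coeff k = (-1) ^ k * (j.choose k : ℤ) := by
  have h : (1 - X : ℤ[X]) ^ j = ((1 + X) ^ j).comp (C (-1) * X) := by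
    simp [sub_eq_add_neg]
  rw [h, comp_C_mul_X_coeff, coeff_one_add_X_pow]
  ring

open Polynomial in
theorem coeff_X_mul_derivative (p : ℤ[X]) (i : ℕ) :
    (X * derivative p).coeff i = i * p.coeff i := by
  rcases i with _ | i
  · simp
  · rw [coeff_X_mul, coeff_derivative]
    push_cast
    ring

theorem kraw_eq_coeff (N i j : ℕ) : kraw N i j = (krawPoly j (N - j)).coeff i := by
  rw [kraw, krawPoly, Polynomial.coeff_mul, Finset.Nat.sum_antidiagonal_eq_sum_range_succ_mk]
  refine Finset.sum_congr rfl fun k _ => ?_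
  rw [coeff_one_sub_X_pow, Polynomial.coeff_one_add_X_pow]

open Polynomial in
/-- The logarithmic derivative of `krawPoly`, with denominators cleared. -/
theorem krawPoly_derivative (j a : ℕ) :
    (1 - X ^ 2) * derivative (krawPoly j a) + ((a : ℤ[X]) + (j : ℤ[X])) * X * krawPoly j a
      = ((a : ℤ[X]) - (j : ℤ[X])) * krawPoly j a := by
  unfold krawPoly
  rcases j with _ | j <;> rcases a with _ | a <;>
    simp [derivative_mul, derivative_pow] <;> ring

open Polynomial in
theorem krawPoly_neighbours (j a : ℕ) :
    (j : ℤ[X]) * krawPoly (j - 1) (a + 1) + (a : ℤ[X]) * krawPoly (j + 1) (a - 1)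
      = ((a : ℤ[X]) + (j : ℤ[X])) * krawPoly j a - 2 * X * derivative (krawPoly j a) := by
  unfold krawPoly
  rcases j with _ | j <;> rcases a with _ | a <;>
    simp [derivative_mul, derivative_pow] <;> ring

open Polynomial in
theorem kraw_eq_zero {N j : ℕ} (hj : j ≤ N) : kraw N (N + 1) j = 0 := by
  rw [kraw_eq_coeff]
  apply coeff_eq_zero_of_natDegree_lt
  have h : (krawPoly j (N - j)).natDegree ≤ j * 1 + (N - j) * 1 := by
    unfold krawPoly
    refine natDegree_mul_le_of_le (natDegree_pow_le_of_le _ ?_) (natDegree_pow_le_of_le _ ?_) <;>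
      compute_degree
  omega

theorem kraw_rec_zero {N j : ℕ} (hj : j ≤ N) :
    kraw N 1 j = ((N : ℤ) - 2 * j) * kraw N 0 j := by
  obtain ⟨a, rfl⟩ := Nat.exists_eq_add_of_le hj
  simp [kraw, Finset.sum_range_succ]
  ring

open Polynomial in
theorem kraw_rec_succ {N j : ℕ} (hj : j ≤ N) (i : ℕ) :
    ((i : ℤ) + 2) * kraw N (i + 2) j + ((N : ℤ) - i) * kraw N i j
      = ((N : ℤ) - 2 * j) * kraw N (i + 1) j := by
  obtain ⟨a, rfl⟩ := Nat.exists_eq_add_of_le hj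
  simp only [kraw_eq_coeff, Nat.add_sub_cancel_left]
  have h := congrArg (fun p : ℤ[X] => p.coeff (i + 1)) (krawPoly_derivative j a)
  have e : (1 - X ^ 2) * derivative (krawPoly j a)
        + ((a : ℤ[X]) + (j : ℤ[X])) * X * krawPoly j a
      = derivative (krawPoly j a) - X * derivative (krawPoly j a) * X
        + C ((a : ℤ) + j) * (krawPoly j a * X) := by
    simp only [map_add, map_natCast]
    ring
  have e' : ((a : ℤ[X]) - (j : ℤ[X])) * krawPoly j a = C ((a : ℤ) - j) * krawPoly j a := by
    simp only [map_sub, map_natCast]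
  rw [e, e'] at h
  simp only [coeff_add, coeff_sub, coeff_C_mul, coeff_mul_X, coeff_derivative] at h
  rw [coeff_X_mul_derivative] at h
  push_cast at h ⊢
  linear_combination h

open Polynomial in
theorem kraw_neighbours {N j : ℕ} (hj : j ≤ N) (i : ℕ) :
    (j : ℤ) * kraw N i (j - 1) + ((N : ℤ) - j) * kraw N i (j + 1)
      = ((N : ℤ) - 2 * i) * kraw N i j := by
  obtain ⟨a, rfl⟩ := Nat.exists_eq_add_of_le hj
  have h := congrArg (fun p : ℤ[X] => p.coeff i) (krawPoly_neighbours j a)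
  have e : ((a : ℤ[X]) + (j : ℤ[X])) * krawPoly j a - 2 * X * derivative (krawPoly j a)
      = C ((a : ℤ) + j) * krawPoly j a - C 2 * (X * derivative (krawPoly j a)) := by
    simp only [map_add, map_natCast, map_ofNat]
    ring
  rw [e, ← C_eq_natCast, ← C_eq_natCast] at h
  simp only [coeff_add, coeff_sub, coeff_C_mul, coeff_X_mul_derivative] at h
  have h1 : (j : ℤ) * kraw (j + a) i (j - 1) = j * (krawPoly (j - 1) (a + 1)).coeff i := by
    rcases j with _ | j
    · simp
    · rw [kraw_eq_coeff, show j + 1 + a - (j + 1 - 1) = a + 1 by omega]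
  rw [h1, kraw_eq_coeff, kraw_eq_coeff, show j + a - (j + 1) = a - 1 by omega,
    Nat.add_sub_cancel_left]
  push_cast at h ⊢
  linear_combination h

theorem Kac_mul_Kmat_apply (N : ℕ) (i j : Fin (N + 1)) :
    ∑ k, Kac N i k * Kmat N k j = ((N : ℤ) - 2 * (j : ℕ)) * Kmat N i j := by
  have hj : (j : ℕ) ≤ N := Nat.lt_succ_iff.mp j.2
  have hi : (i : ℕ) ≤ N := Nat.lt_succ_iff.mp i.2
  simp only [Kac, Kmat, Matrix.of_apply]
  generalize (i : ℕ) = i at hi ⊢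
  generalize (j : ℕ) = j at hj ⊢
  rw [Fin.sum_univ_eq_sum_range (fun k => (if i + 1 = k then (i : ℤ) + 1
    else if k + 1 = i then (N : ℤ) - k else 0) * kraw N k j) (N + 1)]
  have hs : ∑ k ∈ Finset.range (N + 1), (if i + 1 = k then (i : ℤ) + 1
      else if k + 1 = i then (N : ℤ) - k else 0) * kraw N k j
      = ∑ k ∈ Finset.range (N + 2), ((if i + 1 = k then ((i : ℤ) + 1) * kraw N k j else 0)
        + (if k + 1 = i then ((N : ℤ) - k) * kraw N k j else 0)) := by
    -- The extra index `k = N + 1` contributes `0` and absorbs the boundary case `i = N`.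
    rw [Finset.sum_range_succ _ (N + 1), kraw_eq_zero hj]
    simp only [mul_zero, ite_self, add_zero]
    refine Finset.sum_congr rfl fun k _ => ?_
    split_ifs <;> omega
  rw [hs, Finset.sum_add_distrib, Finset.sum_ite_eq, if_pos (by simp; omega)]
  rcases i with _ | i
  · simpa using kraw_rec_zero hj
  · simp only [add_left_inj]
    rw [Finset.sum_ite_eq', if_pos (by simp; omega), ← kraw_rec_succ hj i]
    push_cast
    ring

theorem Kmat_mul_Kac_apply (N : ℕ) (i j : Fin (N + 1)) :
    ∑ k, Kmat N i k * Kac N k j = ((N : ℤ) - 2 * (i : ℕ)) * Kmat N i j := by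
  have hj : (j : ℕ) ≤ N := Nat.lt_succ_iff.mp j.2
  simp only [Kac, Kmat, Matrix.of_apply]
  generalize (i : ℕ) = i
  generalize (j : ℕ) = j at hj ⊢
  rw [Fin.sum_univ_eq_sum_range (fun k => kraw N i k * (if k + 1 = j then (k : ℤ) + 1
    else if j + 1 = k then (N : ℤ) - j else 0)) (N + 1)]
  have hs : ∑ k ∈ Finset.range (N + 1), kraw N i k * (if k + 1 = j then (k : ℤ) + 1
      else if j + 1 = k then (N : ℤ) - j else 0)
      = ∑ k ∈ Finset.range (N + 1), ((if k + 1 = j then ((k : ℤ) + 1) * kraw N i k else 0)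
        + (if j + 1 = k then ((N : ℤ) - j) * kraw N i k else 0)) := by
    refine Finset.sum_congr rfl fun k _ => ?_
    split_ifs <;> first | omega | ring
  have hright : (if j + 1 ∈ Finset.range (N + 1) then ((N : ℤ) - j) * kraw N i (j + 1) else 0)
      = ((N : ℤ) - j) * kraw N i (j + 1) := by
    split_ifs with h
    · rfl
    · obtain rfl : j = N := by
        simp at h
        omega
      simp
  rw [hs, Finset.sum_add_distrib, Finset.sum_ite_eq, hright, ← kraw_neighbours hj i]
  congr 1
  rcases j with _ | j
  · simp
  · simp only [add_left_inj]
    rw [Finset.sum_ite_eq', if_pos (by simp; omega)]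
    push_cast
    simp

/-- `A^(N) K^(N) = K^(N) Λ^(N)` and `K^(N) A^(N) = Λ^(N) K^(N)`; in particular each
column of `K^(N)` is an eigenvector of the Kac matrix with eigenvalue `N − 2k`. -/
theorem kac_krawtchouk_spectral (N : ℕ) (hN : 1 ≤ N) :
    Kac N * Kmat N = Kmat N * Lam N ∧ Kmat N * Kac N = Lam N * Kmat N ∧
      ∀ k : Fin (N + 1),
        (Kac N).mulVec (fun i => Kmat N i k)
          = ((N : ℤ) - 2 * (k : ℕ)) • fun i => Kmat N i k := by
  refine ⟨?_, ?_, fun k => ?_⟩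
  · ext i j
    rw [Matrix.mul_apply, Kac_mul_Kmat_apply, Lam, Matrix.mul_diagonal, mul_comm]
  · ext i j
    rw [Matrix.mul_apply, Kmat_mul_Kac_apply, Lam, Matrix.diagonal_mul]
  · ext i
    exact Kac_mul_Kmat_apply N i k
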